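/- Let W be a real n × n matrix, let p ≥ 1, let 0 < c < 1, and let K = {Ψ ∈ ℝ^{p×p} : ‖Ψᵀ ⊗ W‖₁ ≤ c}. Then the map Ψ ↦ (1/(np)) log det(I_{np} − Ψᵀ ⊗ W) is Lipschitz continuous on K: there exists a constant L (depending only on c and ‖W‖₁, not on n) such that for all Ψ, Ψ' ∈ K, |(1/(np)) log det(I − Ψᵀ ⊗ W) − (1/(np)) log det(I − Ψ'ᵀ ⊗ W)| ≤ L · max_{i,j} |ψ_{ij} − ψ'_{ij}|. -/

import Mathlib

open Matrix Kronecker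

/-- Maximum absolute column sum norm of a square real matrix. -/
noncomputable def colNorm {ι : Type*} [Fintype ι] (A : Matrix ι ι ℝ) : ℝ :=
  ⨆ j, ∑ i, |A i j|

/-!
Along the segment joining two matrices of norm at most `c < 1`, the matrix `1 - A` stays
invertible, and its inverse has norm at most `1 / (1 - c)`. By Jacobi's formula the derivative of
`log det` along the segment is a trace `tr (M * D)`, where `M` is that inverse and `D` is the
direction. Bounding `D` entrywise gives `|tr (M * D)| ≤ N * ‖M‖ * max |D i j|` for `N × N`
matrices, so nothing depending on the dimension is left after division by `N = n p`; bounding `D`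
in operator norm would cost a factor `p`.

`Real.log x` is `log |x|`, so along the segment it is enough that the determinant does not vanish.
-/

section JacobiFormula

theorem sum_det_updateRow_eq_trace_adjugate_mul {R ι : Type*} [CommRing R] [Fintype ι]
    [DecidableEq ι] (A B : Matrix ι ι R) :
    ∑ i, (A.updateRow i (B i)).det = (A.adjugate * B).trace := by
  rw [trace_mul_comm]
  refine Finset.sum_congr rfl fun i _ ↦ ?_
  rw [← cramer_transpose_apply, cramer_eq_adjugate_mulVec, ← adjugate_transpose, mulVec_transpose]
  rfl

variable {𝕜 ι : Type*} [NontriviallyNormedField 𝕜] [Fintype ι] [DecidableEq ι]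

theorem hasDerivAt_det {M : 𝕜 → Matrix ι ι 𝕜} {M' : Matrix ι ι 𝕜} {t : 𝕜}
    (hM : ∀ i j, HasDerivAt (fun s ↦ M s i j) (M' i j) t) :
    HasDerivAt (fun s ↦ (M s).det) ((M t).adjugate * M').trace t := by
  let detRow : ContinuousMultilinearMap 𝕜 (fun _ : ι ↦ ι → 𝕜) 𝕜 :=
    ⟨detRowAlternating.toMultilinearMap, continuous_id.matrix_det⟩
  have hrows : HasDerivAt (fun s i ↦ M s i) (fun i ↦ M' i) t :=
    hasDerivAt_pi.mpr fun i ↦ hasDerivAt_pi.mpr (hM i)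
  refine ((detRow.hasFDerivAt (M t)).comp_hasDerivAt t hrows).congr_deriv ?_
  rw [← sum_det_updateRow_eq_trace_adjugate_mul]
  exact detRow.linearDeriv_apply _ _

theorem hasDerivAt_log_det {M : ℝ → Matrix ι ι ℝ} {M' : Matrix ι ι ℝ} {t : ℝ}
    (hM : ∀ i j, HasDerivAt (fun s ↦ M s i j) (M' i j) t) (hdet : (M t).det ≠ 0) :
    HasDerivAt (fun s ↦ Real.log (M s).det) ((M t)⁻¹ * M').trace t := by
  refine ((hasDerivAt_det hM).log hdet).congr_deriv ?_
  rw [inv_def, smul_mul, trace_smul, Ring.inverse_eq_inv', smul_eq_mul, div_eq_inv_mul]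

end JacobiFormula

theorem norm_le_of_one_sub_mul_eq_one {R : Type*} [SeminormedRing R] {x y : R} (hx : ‖x‖ < 1)
    (hxy : (1 - x) * y = 1) : ‖y‖ ≤ ‖(1 : R)‖ / (1 - ‖x‖) := by
  have hy : y = 1 + x * y := by rw [← hxy, sub_mul, one_mul, sub_add_cancel]
  have hnorm : ‖y‖ ≤ ‖(1 : R)‖ + ‖x‖ * ‖y‖ :=
    calc ‖y‖ = ‖1 + x * y‖ := congrArg norm hy
      _ ≤ ‖(1 : R)‖ + ‖x‖ * ‖y‖ := norm_add_le_of_le le_rfl (norm_mul_le x y)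
  rw [le_div_iff₀ (sub_pos.mpr hx)]
  linarith

section RowSumNorm

open scoped Matrix.Norms.Operator

theorem linfty_opNorm_eq_iSup {m n α : Type*} [Fintype m] [Fintype n] [SeminormedAddCommGroup α]
    (A : Matrix m n α) : ‖A‖ = ⨆ i, ∑ j, ‖A i j‖ := by
  rw [linfty_opNorm_def, Finset.sup_univ_eq_ciSup]
  push_cast
  rfl

theorem sum_norm_row_le_linfty_opNorm {m n α : Type*} [Fintype m] [Fintype n]
    [SeminormedAddCommGroup α] (A : Matrix m n α) (i : m) : ∑ j, ‖A i j‖ ≤ ‖A‖ := by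
  rw [linfty_opNorm_eq_iSup]
  exact le_ciSup (f := fun i ↦ ∑ j, ‖A i j‖) (Set.finite_range _).bddAbove i

theorem norm_entry_le_linfty_opNorm {m n α : Type*} [Fintype m] [Fintype n]
    [SeminormedAddCommGroup α] (A : Matrix m n α) (i : m) (j : n) : ‖A i j‖ ≤ ‖A‖ :=
  (Finset.single_le_sum (f := fun j ↦ ‖A i j‖) (fun _ _ ↦ norm_nonneg _)
    (Finset.mem_univ j)).trans (sum_norm_row_le_linfty_opNorm A i)

theorem norm_trace_mul_le {m n R : Type*} [Fintype m] [Fintype n] [NonUnitalSeminormedRing R]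
    (M : Matrix m n R) {D : Matrix n m R} {d : ℝ} (hd : 0 ≤ d) (hD : ∀ i j, ‖D i j‖ ≤ d) :
    ‖(M * D).trace‖ ≤ Fintype.card m * (‖M‖ * d) :=
  calc ‖(M * D).trace‖ ≤ ∑ i, ‖(M * D) i i‖ := norm_sum_le _ _
    _ ≤ ∑ i, ∑ k, ‖M i k * D k i‖ := Finset.sum_le_sum fun i _ ↦ norm_sum_le _ _
    _ ≤ ∑ i, ∑ k, ‖M i k‖ * d := by
        gcongr with i _ k _
        exact (norm_mul_le _ _).trans (by gcongr; exact hD k i)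
    _ = ∑ i, (∑ k, ‖M i k‖) * d := by simp only [Finset.sum_mul]
    _ ≤ ∑ _i : m, ‖M‖ * d := by gcongr with i; exact sum_norm_row_le_linfty_opNorm M i
    _ = Fintype.card m * (‖M‖ * d) := by
        rw [Finset.sum_const, Finset.card_univ, nsmul_eq_mul]

section Inverse

variable {𝕜 ι : Type*} [NormedField 𝕜] [Fintype ι] [DecidableEq ι]

theorem det_one_sub_ne_zero_of_norm_lt_one {A : Matrix ι ι 𝕜} (hA : ‖A‖ < 1) :
    (1 - A).det ≠ 0 := by
  intro hdet
  obtain ⟨v, hv, hAv⟩ := exists_mulVec_eq_zero_iff.mpr hdet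
  have hfix : v = A *ᵥ v := by rwa [sub_mulVec, one_mulVec, sub_eq_zero] at hAv
  refine lt_irrefl ‖v‖ ?_
  calc ‖v‖ = ‖A *ᵥ v‖ := congrArg norm hfix
    _ ≤ ‖A‖ * ‖v‖ := linfty_opNorm_mulVec A v
    _ < ‖v‖ := mul_lt_of_lt_one_left (norm_pos_iff.mpr hv) hA

theorem norm_inv_one_sub_le {A : Matrix ι ι 𝕜} (hA : ‖A‖ < 1) :
    ‖(1 - A)⁻¹‖ ≤ 1 / (1 - ‖A‖) := by
  have hinv : (1 - A) * (1 - A)⁻¹ = 1 :=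
    mul_nonsing_inv _ (det_one_sub_ne_zero_of_norm_lt_one hA).isUnit
  have hone : ‖(1 : Matrix ι ι 𝕜)‖ ≤ 1 := by
    rw [← diagonal_one, linfty_opNorm_diagonal]
    exact (pi_norm_const_le _).trans_eq norm_one
  refine (norm_le_of_one_sub_mul_eq_one hA hinv).trans ?_
  gcongr

theorem norm_trace_inv_one_sub_mul_le {A D : Matrix ι ι 𝕜} {c d : ℝ} (hc : c < 1) (hA : ‖A‖ ≤ c)
    (hd : 0 ≤ d) (hD : ∀ i j, ‖D i j‖ ≤ d) :
    ‖((1 - A)⁻¹ * D).trace‖ ≤ Fintype.card ι * (d / (1 - c)) :=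
  calc ‖((1 - A)⁻¹ * D).trace‖ ≤ Fintype.card ι * (‖(1 - A)⁻¹‖ * d) := norm_trace_mul_le _ hd hD
    _ ≤ Fintype.card ι * (1 / (1 - ‖A‖) * d) := by
        gcongr
        exact norm_inv_one_sub_le (hA.trans_lt hc)
    _ ≤ Fintype.card ι * (1 / (1 - c) * d) := by gcongr
    _ = Fintype.card ι * (d / (1 - c)) := by rw [one_div_mul_eq_div]

end Inverse

theorem abs_log_det_one_sub_sub_le {ι : Type*} [Fintype ι] [DecidableEq ι] {A B : Matrix ι ι ℝ}
    {c d : ℝ} (hc : c < 1) (hA : ‖A‖ ≤ c) (hB : ‖B‖ ≤ c) (hd : 0 ≤ d)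
    (hAB : ∀ i j, |A i j - B i j| ≤ d) :
    |Real.log (1 - A).det - Real.log (1 - B).det| ≤ Fintype.card ι * (d / (1 - c)) := by
  let γ : ℝ → Matrix ι ι ℝ := fun t ↦ AffineMap.lineMap B A t
  have hγ {t : ℝ} (ht : t ∈ Set.Icc 0 1) : ‖γ t‖ ≤ c := by
    rw [← mem_closedBall_zero_iff] at hA hB ⊢
    exact (convex_closedBall 0 c).lineMap_mem hB hA ht
  have hγ' (t : ℝ) (i j : ι) : HasDerivAt (fun s ↦ (1 - γ s) i j) ((B - A) i j) t := by
    have hline : HasDerivAt (fun s ↦ AffineMap.lineMap (B i j) (A i j) s) (A i j - B i j) t :=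
      AffineMap.hasDerivAt_lineMap
    exact (hline.const_sub ((1 : Matrix ι ι ℝ) i j)).congr_deriv (neg_sub _ _)
  have hdet {t : ℝ} (ht : t ∈ Set.Icc 0 1) : (1 - γ t).det ≠ 0 :=
    det_one_sub_ne_zero_of_norm_lt_one ((hγ ht).trans_lt hc)
  have hderiv : ∀ t ∈ Set.Icc (0 : ℝ) 1, HasDerivWithinAt (fun s ↦ Real.log (1 - γ s).det)
      ((1 - γ t)⁻¹ * (B - A)).trace (Set.Icc 0 1) t := fun t ht ↦
    (hasDerivAt_log_det (hγ' t) (hdet ht)).hasDerivWithinAt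
  have hbound : ∀ t ∈ Set.Ico (0 : ℝ) 1,
      ‖((1 - γ t)⁻¹ * (B - A)).trace‖ ≤ Fintype.card ι * (d / (1 - c)) := fun t ht ↦
    norm_trace_inv_one_sub_mul_le hc (hγ (Set.Ico_subset_Icc_self ht)) hd fun i j ↦
      (abs_sub_comm _ _).trans_le (hAB i j)
  simpa only [γ, AffineMap.lineMap_apply_one, AffineMap.lineMap_apply_zero, Real.norm_eq_abs]
    using norm_image_sub_le_of_norm_deriv_le_segment_01' hderiv hbound

section ColumnSumNorm

variable {ι : Type*} [Fintype ι]

theorem colNorm_eq_norm_transpose (A : Matrix ι ι ℝ) : colNorm A = ‖Aᵀ‖ :=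
  (linfty_opNorm_eq_iSup Aᵀ).symm

theorem colNorm_nonneg (A : Matrix ι ι ℝ) : 0 ≤ colNorm A :=
  (norm_nonneg Aᵀ).trans_eq (colNorm_eq_norm_transpose A).symm

theorem abs_apply_le_colNorm (A : Matrix ι ι ℝ) (i j : ι) : |A i j| ≤ colNorm A :=
  (norm_entry_le_linfty_opNorm Aᵀ j i).trans_eq (colNorm_eq_norm_transpose A).symm

theorem abs_log_det_one_sub_sub_le_of_colNorm_le [DecidableEq ι] {A B : Matrix ι ι ℝ}
    {c d : ℝ} (hc : c < 1) (hA : colNorm A ≤ c) (hB : colNorm B ≤ c) (hd : 0 ≤ d)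
    (hAB : ∀ i j, |A i j - B i j| ≤ d) :
    |Real.log (1 - A).det - Real.log (1 - B).det| ≤ Fintype.card ι * (d / (1 - c)) := by
  have hdet (C : Matrix ι ι ℝ) : (1 - C).det = (1 - Cᵀ).det := by
    rw [← det_transpose, transpose_sub, transpose_one]
  rw [colNorm_eq_norm_transpose] at hA hB
  rw [hdet A, hdet B]
  exact abs_log_det_one_sub_sub_le hc hA hB hd fun i j ↦ hAB j i

end ColumnSumNorm

end RowSumNorm

section Kronecker

theorem abs_apply_le_iSup_iSup {m n : Type*} [Finite m] [Finite n] (f : m → n → ℝ) (i : m)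
    (j : n) : |f i j| ≤ ⨆ i, ⨆ j, |f i j| :=
  (le_ciSup (f := fun j ↦ |f i j|) (Set.finite_range _).bddAbove j).trans
    (le_ciSup (f := fun i ↦ ⨆ j, |f i j|) (Set.finite_range _).bddAbove i)

theorem abs_transpose_kronecker_sub_apply_le {m n : Type*} [Finite m] [Fintype n]
    (Ψ Ψ' : Matrix m m ℝ) (W : Matrix n n ℝ) (a b : m × n) :
    |(Ψᵀ ⊗ₖ W) a b - (Ψ'ᵀ ⊗ₖ W) a b| ≤ (⨆ i, ⨆ j, |Ψ i j - Ψ' i j|) * colNorm W := by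
  have hΨ := abs_apply_le_iSup_iSup (fun i j ↦ Ψ i j - Ψ' i j) b.1 a.1
  rw [kroneckerMap_apply, kroneckerMap_apply, ← sub_mul, abs_mul]
  exact mul_le_mul hΨ (abs_apply_le_colNorm W _ _) (abs_nonneg _) ((abs_nonneg _).trans hΨ)

variable {m n : Type*} [Fintype m] [DecidableEq m] [Fintype n] [DecidableEq n]

theorem abs_log_det_one_sub_kronecker_sub_le {c : ℝ} (hc : c < 1) (W : Matrix n n ℝ)
    {Ψ Ψ' : Matrix m m ℝ} (hΨ : colNorm (Ψᵀ ⊗ₖ W) ≤ c) (hΨ' : colNorm (Ψ'ᵀ ⊗ₖ W) ≤ c) :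
    |Real.log (1 - Ψᵀ ⊗ₖ W).det - Real.log (1 - Ψ'ᵀ ⊗ₖ W).det| ≤
      Fintype.card n * Fintype.card m *
        (colNorm W / (1 - c) * ⨆ i, ⨆ j, |Ψ i j - Ψ' i j|) := by
  have hδ : 0 ≤ ⨆ i, ⨆ j, |Ψ i j - Ψ' i j| :=
    Real.iSup_nonneg fun _ ↦ Real.iSup_nonneg fun _ ↦ abs_nonneg _
  refine (abs_log_det_one_sub_sub_le_of_colNorm_le hc hΨ hΨ' (mul_nonneg hδ (colNorm_nonneg W))
    (abs_transpose_kronecker_sub_apply_le Ψ Ψ' W)).trans_eq ?_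
  rw [Fintype.card_prod, Nat.cast_mul]
  ring

theorem stmt19_general [Nonempty m] {c : ℝ} (hc1 : c < 1) (W : Matrix n n ℝ)
    {Ψ Ψ' : Matrix m m ℝ} (hΨ : colNorm (Ψᵀ ⊗ₖ W) ≤ c) (hΨ' : colNorm (Ψ'ᵀ ⊗ₖ W) ≤ c) :
    |(1 / ((Fintype.card n : ℝ) * Fintype.card m)) * Real.log (1 - Ψᵀ ⊗ₖ W).det -
        (1 / ((Fintype.card n : ℝ) * Fintype.card m)) * Real.log (1 - Ψ'ᵀ ⊗ₖ W).det| ≤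
      colNorm W / (1 - c) * ⨆ i, ⨆ j, |Ψ i j - Ψ' i j| := by
  have hlog := abs_log_det_one_sub_kronecker_sub_le hc1 W hΨ hΨ'
  rw [← mul_sub, abs_mul, abs_of_nonneg (by positivity), one_div_mul_eq_div]
  rcases isEmpty_or_nonempty n with _ | _
  · simp [colNorm]
  · rwa [div_le_iff₀' (by positivity)]

end Kronecker

/-- For `0 < c < 1`, the map `Ψ ↦ (1/(np)) log det(I_{np} − Ψᵀ ⊗ W)`
is Lipschitz on `K = {Ψ : ‖Ψᵀ ⊗ W‖₁ ≤ c}` with respect to the entrywise maximum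
norm, with a Lipschitz constant `L` depending only on `c` and `‖W‖₁` (in
particular, not on `n`). -/
theorem stmt19 (c : ℝ) (hc0 : 0 < c) (hc1 : c < 1) :
    ∃ L : ℝ → ℝ, ∀ (n p : ℕ), 1 ≤ p →
      ∀ (W : Matrix (Fin n) (Fin n) ℝ) (Ψ Ψ' : Matrix (Fin p) (Fin p) ℝ),
        colNorm (Ψᵀ ⊗ₖ W) ≤ c → colNorm (Ψ'ᵀ ⊗ₖ W) ≤ c →
        |(1 / ((n : ℝ) * p)) * Real.log (1 - Ψᵀ ⊗ₖ W).det -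
            (1 / ((n : ℝ) * p)) * Real.log (1 - Ψ'ᵀ ⊗ₖ W).det| ≤
          L (colNorm W) * ⨆ i, ⨆ j, |Ψ i j - Ψ' i j| := by
  refine ⟨fun w ↦ w / (1 - c), fun n p hp W Ψ Ψ' hΨ hΨ' ↦ ?_⟩
  have : Nonempty (Fin p) := ⟨⟨0, hp⟩⟩
  simpa only [Fintype.card_fin] using stmt19_general hc1 W hΨ hΨ'
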